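/- Let Ω, U, λ, u be as in the setting. Every critical point z₀ ∈ closure(Ω) of u that is neither a local minimum point nor a local maximum point of u is an isolated critical point (there exists ε > 0 such that z₀ is the only point w in the open ball of radius ε around z₀ with ∇u(w) = 0). Consequently, the set of critical points of u in closure(Ω) that are neither local minimum points nor local maximum points of u is finite. -/

import Mathlib

open Metric Set Filter Topology MeasureTheory

noncomputable section

abbrev E2 := EuclideanSpace ℝ (Fin 2)

/-- The Laplacian of `u`: the sum of the two pure second partial derivatives. -/
def lap (u : E2 → ℝ) (z : E2) : ℝ :=
  ∑ i : Fin 2, iteratedFDeriv ℝ 2 u z (fun _ => EuclideanSpace.single i 1)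

/-!
Near each point `z` the eigenfunction `u` satisfies a dichotomy: either `z` is the only possible
critical point nearby, or all critical points nearby are local extrema. Compactness then leaves room
for finitely many saddles only.

If `Δu(z) = 0`, the equation gives `Δu = O(u - u(z))`. Let `P` be the leading Taylor form of
`u - u(z)`, of degree `m + 1`. Then `ΔP` is `O(|y|^m)` but homogeneous of degree `m - 1`, so `P` is
harmonic. In the plane its gradient is a nonzero multiple of the complex conjugate of a power `ζ^m`,
hence it dominates the gradient of the remainder and `u` has no critical points near `z` except
possibly `z`.

If `Δu(z) ≠ 0`, some second directional derivative is nonzero, say positive. Nearby critical points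
then lie on the analytic curve on which the derivative in that direction vanishes, and `u` is
minimised on this curve among nearby points of each line in that direction. The restriction of `u`
to the curve is an analytic function of one variable: its critical points are isolated, or it is
constant and all critical points of `u` near `z` are local minima.
-/

section Development

open Asymptotics InnerProductSpace Laplacian Module

section Vanishing

variable {𝕜 E F : Type*} [NontriviallyNormedField 𝕜] [NormedAddCommGroup E] [NormedSpace 𝕜 E]
  [NormedAddCommGroup F] [NormedSpace 𝕜 F] {f : E → F} {z : E} {n : ℕ}

variable (𝕜) in
/-- `f` is analytic at `z` and its Taylor expansion there has no terms of degree less than `n`. It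
controls the remainder after the leading Taylor form together with its derivatives. -/
def VanishesToOrder (f : E → F) (z : E) (n : ℕ) : Prop :=
  ∃ p : FormalMultilinearSeries 𝕜 E F, HasFPowerSeriesAt f p z ∧ ∀ k < n, p k = 0

namespace VanishesToOrder

theorem mono {m : ℕ} (h : VanishesToOrder 𝕜 f z n) (hmn : m ≤ n) : VanishesToOrder 𝕜 f z m :=
  let ⟨p, hp, hlow⟩ := h
  ⟨p, hp, fun k hk => hlow k (hk.trans_le hmn)⟩

theorem isBigO (h : VanishesToOrder 𝕜 f z n) :
    (fun y => f (z + y)) =O[𝓝 0] fun y => ‖y‖ ^ n := by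
  obtain ⟨p, hp, hlow⟩ := h
  refine (hp.isBigO_sub_partialSum_pow n).congr_left fun y => ?_
  have hsum : p.partialSum n y = 0 :=
    Finset.sum_eq_zero fun k hk => by simp [hlow k (Finset.mem_range.mp hk)]
  rw [hsum, sub_zero]

protected theorem fderiv [CompleteSpace F] (h : VanishesToOrder 𝕜 f z (n + 1)) :
    VanishesToOrder 𝕜 (fderiv 𝕜 f) z n := by
  obtain ⟨p, ⟨r, hp⟩, hlow⟩ := h
  exact ⟨p.derivSeries, ⟨r, hp.fderiv⟩, fun k hk => p.derivSeries_eq_zero (hlow _ (by lia))⟩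

end VanishesToOrder

theorem vanishesToOrder_sub_partialSum {p : FormalMultilinearSeries 𝕜 E F}
    (hp : HasFPowerSeriesAt f p z) (n : ℕ) :
    VanishesToOrder 𝕜 (fun w => f w - p.partialSum n (w - z)) z n := by
  obtain ⟨r, hp⟩ := hp
  let q : FormalMultilinearSeries 𝕜 E F := fun k => if k < n then 0 else p k
  refine ⟨q, ⟨r, hp.r_le.trans ?_, hp.r_pos, fun {y} hy => ?_⟩, fun k hk => if_pos hk⟩
  · refine FormalMultilinearSeries.radius_le_of_le fun k => ?_
    by_cases hk : k < n <;> simp [q, hk]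
  · have hlow : HasSum (fun k => if k < n then p k (fun _ => y) else 0) (p.partialSum n y) := by
      rw [FormalMultilinearSeries.partialSum, Finset.sum_congr rfl fun k hk =>
        (if_pos (Finset.mem_range.mp hk)).symm]
      exact hasSum_sum_of_ne_finset_zero fun k hk => if_neg (by simpa using hk)
    rw [add_sub_cancel_left]
    refine ((hp.hasSum hy).sub hlow).congr_fun fun k => ?_
    by_cases hk : k < n <;> simp [q, hk]

theorem exists_leadingForm (hf : AnalyticAt 𝕜 f z) (hne : ¬ ∀ᶠ w in 𝓝 z, f w = 0) :
    ∃ (n : ℕ) (P : ContinuousMultilinearMap 𝕜 (fun _ : Fin n => E) F),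
      (∃ y, P (fun _ => y) ≠ 0) ∧
        VanishesToOrder 𝕜 (f - fun w => P fun _ => w - z) z (n + 1) := by
  classical
  obtain ⟨p, hp⟩ := hf
  have hex : ∃ n, ∃ y, p n (fun _ => y) ≠ 0 := by
    contrapose! hne
    filter_upwards [hp.eventually_hasSum_sub] with w hw
    exact hw.unique (by simp only [hne, hasSum_zero])
  have hmin : ∀ k < Nat.find hex, ∀ y, p k (fun _ => y) = 0 := fun k hk => by
    simpa using Nat.find_min hex hk
  refine ⟨Nat.find hex, p _, Nat.find_spec hex, ?_⟩
  convert vanishesToOrder_sub_partialSum hp (Nat.find hex + 1) using 1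
  funext w
  rw [Pi.sub_apply, FormalMultilinearSeries.partialSum, Finset.sum_range_succ,
    Finset.sum_eq_zero fun k hk => hmin k (Finset.mem_range.mp hk) _, zero_add]

theorem contDiff_diagonal {m : WithTop ℕ∞} (P : ContinuousMultilinearMap 𝕜 (fun _ : Fin n => E) F) :
    ContDiff 𝕜 m fun y => P fun _ => y :=
  P.contDiff.comp (contDiff_pi.2 fun _ => contDiff_id)

theorem isBigO_diagonal (P : ContinuousMultilinearMap 𝕜 (fun _ : Fin n => E) F) (l : Filter E) :
    (fun y => P fun _ => y) =O[l] fun y => ‖y‖ ^ n :=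
  .of_bound ‖P‖ <| .of_forall fun y => by simpa using P.le_opNorm fun _ => y

end Vanishing

section Homogeneous

variable {E F : Type*} [NormedAddCommGroup E] [NormedSpace ℝ E]
  [NormedAddCommGroup F] [NormedSpace ℝ F] {f : E → F}

/-- `f` is homogeneous of degree `n` under every nonzero (possibly negative) scaling, as leading
Taylor forms are. The degree is an integer so that each derivative lowers it by exactly one. -/
def IsHomogeneousOfDegree (f : E → F) (n : ℤ) : Prop :=
  ∀ t : ℝ, t ≠ 0 → ∀ y, f (t • y) = t ^ n • f y

theorem isHomogeneousOfDegree_diagonal {n : ℕ}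
    (P : ContinuousMultilinearMap ℝ (fun _ : Fin n => E) F) :
    IsHomogeneousOfDegree (fun y => P fun _ => y) n := fun t _ y => by
  simpa using P.map_smul_univ (fun _ => t) (fun _ => y)

namespace IsHomogeneousOfDegree

protected theorem fderiv {n : ℤ} (hf : IsHomogeneousOfDegree f n) :
    IsHomogeneousOfDegree (fderiv ℝ f) (n - 1) := fun t ht y => by
  have hscale : t • fderiv ℝ f (t • y) = t ^ n • fderiv ℝ f y := by
    rw [← fderiv_comp_smul, show (fun x => f (t • x)) = t ^ n • f from funext (hf t ht),
      fderiv_const_smul_field, Pi.smul_apply]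
  rw [zpow_sub_one₀ ht, mul_comm, mul_smul, ← hscale, inv_smul_smul₀ ht]

theorem eq_zero_of_isBigO {n : ℤ} {k : ℕ} (hf : IsHomogeneousOfDegree f n) (hnk : n < k)
    (hO : f =O[𝓝 0] fun y => ‖y‖ ^ k) : f = 0 := by
  funext y
  have hscale : Tendsto (fun t : ℝ => t • y) (𝓝[≠] 0) (𝓝 0) :=
    ((continuous_id.smul continuous_const).tendsto' 0 0 (zero_smul ℝ y)).mono_left
      nhdsWithin_le_nhds
  have hbound : (fun _ : ℝ => f y) =O[𝓝[≠] 0] fun t => t ^ (k - n) := by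
    calc (fun _ : ℝ => f y) =ᶠ[𝓝[≠] 0] fun t => t ^ (-n) • f (t • y) := by
          filter_upwards [self_mem_nhdsWithin] with t (ht : t ≠ 0)
          rw [hf t ht, smul_smul, ← zpow_add₀ ht, neg_add_cancel, zpow_zero, one_smul]
      _ =O[𝓝[≠] 0] fun t => t ^ (-n) • ‖t • y‖ ^ k :=
          (isBigO_refl _ _).smul (hO.comp_tendsto hscale)
      _ =O[𝓝[≠] 0] fun t => t ^ (k - n) := .of_bound (‖y‖ ^ k) <| by
          filter_upwards [self_mem_nhdsWithin] with t (ht : t ≠ 0)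
          rw [sub_eq_neg_add, zpow_add₀ ht, zpow_natCast]
          simp only [norm_smul, norm_mul, norm_pow, norm_norm, smul_eq_mul, mul_pow]
          exact le_of_eq (by ring)
  have hlim : Tendsto (fun t : ℝ => t ^ (k - n)) (𝓝[≠] 0) (𝓝 0) := by
    have hpos : 0 < k - n := sub_pos.2 hnk
    simpa [zero_zpow _ hpos.ne'] using
      (continuousAt_zpow₀ (0 : ℝ) _ (.inr hpos.le)).tendsto.mono_left nhdsWithin_le_nhds
  exact tendsto_const_nhds_iff.1 (hbound.trans_tendsto hlim)

end IsHomogeneousOfDegree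

end Homogeneous

section Laplacian

variable {E F : Type*} [NormedAddCommGroup E] [InnerProductSpace ℝ E] [FiniteDimensional ℝ E]
  [NormedAddCommGroup F] [NormedSpace ℝ F] {f : E → F} {z : E} {n : ℕ}

theorem laplacian_eq_sum_fderiv_fderiv (f : E → F) (z : E) :
    Δ f z = ∑ i, fderiv ℝ (fderiv ℝ f) z (stdOrthonormalBasis ℝ E i)
      (stdOrthonormalBasis ℝ E i) := by
  simp [laplacian_eq_iteratedFDeriv_stdOrthonormalBasis, iteratedFDeriv_two_apply]

theorem IsHomogeneousOfDegree.laplacian {n : ℤ} (hf : IsHomogeneousOfDegree f n) :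
    IsHomogeneousOfDegree (Δ f) (n - 1 - 1) := fun t ht y => by
  simp only [laplacian_eq_sum_fderiv_fderiv, hf.fderiv.fderiv t ht, smul_apply,
    Finset.smul_sum]

theorem norm_laplacian_le (f : E → F) (z : E) :
    ‖Δ f z‖ ≤ finrank ℝ E * ‖fderiv ℝ (fderiv ℝ f) z‖ := by
  rw [laplacian_eq_sum_fderiv_fderiv]
  calc _ ≤ ∑ _ : Fin (finrank ℝ E), ‖fderiv ℝ (fderiv ℝ f) z‖ := by
        refine norm_sum_le_of_le _ fun i _ => ?_
        simpa using (fderiv ℝ (fderiv ℝ f) z).le_opNorm₂ (stdOrthonormalBasis ℝ E i)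
          (stdOrthonormalBasis ℝ E i)
    _ = _ := by simp

theorem VanishesToOrder.laplacian_isBigO [CompleteSpace F] (h : VanishesToOrder ℝ f z (n + 2)) :
    (fun y => Δ f (z + y)) =O[𝓝 0] fun y => ‖y‖ ^ n :=
  (IsBigO.of_bound _ (.of_forall fun y => norm_laplacian_le f (z + y))).trans h.fderiv.fderiv.isBigO

theorem laplacian_diagonal_eq_zero [CompleteSpace F] {m : ℕ}
    {P : ContinuousMultilinearMap ℝ (fun _ : Fin (m + 1) => E) F}
    (hf : VanishesToOrder ℝ (f - fun w => P fun _ => w) 0 (m + 2)) (hfO : Δ f =O[𝓝 0] f) :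
    Δ (fun y => P fun _ => y) = 0 := by
  set Q : E → F := fun y => P fun _ => y
  have hrem : (f - Q) =O[𝓝 0] fun y => ‖y‖ ^ m := by
    simpa only [zero_add] using (hf.mono (Nat.le_add_right m 2)).isBigO
  have hQO : Q =O[𝓝 0] fun y => ‖y‖ ^ m :=
    (isBigO_diagonal P _).trans (isLittleO_norm_pow_norm_pow m.lt_succ_self).isBigO
  have hΔf : Δ f =O[𝓝 0] fun y => ‖y‖ ^ m :=
    hfO.trans (by simpa only [Pi.sub_apply, sub_add_cancel] using hrem.add hQO)
  have hΔrem : Δ (f - Q) =O[𝓝 0] fun y => ‖y‖ ^ m := by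
    simpa only [zero_add] using hf.laplacian_isBigO
  have hsub : Δ f - Δ (f - Q) =ᶠ[𝓝 0] Δ Q := by
    obtain ⟨p, hp, -⟩ := hf
    have h := hp.analyticAt.contDiffAt.laplacian_add_nhds (contDiff_diagonal P).contDiffAt
    rw [sub_add_cancel] at h
    filter_upwards [h] with y hy using by rw [Pi.sub_apply, hy, Pi.add_apply, add_sub_cancel_left]
  have hhom := (isHomogeneousOfDegree_diagonal P).laplacian
  exact hhom.eq_zero_of_isBigO (by lia) ((hΔf.sub hΔrem).congr' hsub .rfl)

end Laplacian

section ChainRule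

theorem iteratedFDeriv_comp_continuousLinearEquiv {𝕜 E E' F : Type*} [NontriviallyNormedField 𝕜]
    [NormedAddCommGroup E] [NormedSpace 𝕜 E] [NormedAddCommGroup E'] [NormedSpace 𝕜 E']
    [NormedAddCommGroup F] [NormedSpace 𝕜 F] (f : E' → F) (φ : E ≃L[𝕜] E') (x : E) (n : ℕ) :
    iteratedFDeriv 𝕜 n (f ∘ φ) x =
      (iteratedFDeriv 𝕜 n f (φ x)).compContinuousLinearMap fun _ => (φ : E →L[𝕜] E') := by
  simpa only [preimage_univ, iteratedFDerivWithin_univ] using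
    φ.iteratedFDerivWithin_comp_right f uniqueDiffOn_univ (mem_univ (φ x)) n

theorem laplacian_comp_linearIsometryEquiv {E E' F : Type*} [NormedAddCommGroup E]
    [InnerProductSpace ℝ E] [FiniteDimensional ℝ E] [NormedAddCommGroup E']
    [InnerProductSpace ℝ E'] [FiniteDimensional ℝ E'] [NormedAddCommGroup F] [NormedSpace ℝ F]
    (f : E' → F) (φ : E ≃ₗᵢ[ℝ] E') : Δ (f ∘ φ) = Δ f ∘ φ := by
  funext x
  let b := stdOrthonormalBasis ℝ E
  rw [Function.comp_apply, laplacian_eq_iteratedFDeriv_orthonormalBasis (f ∘ φ) b,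
    laplacian_eq_iteratedFDeriv_orthonormalBasis f (b.map φ)]
  refine Finset.sum_congr rfl fun i _ => ?_
  refine (congrArg (· ![b i, b i])
    (iteratedFDeriv_comp_continuousLinearEquiv f φ.toContinuousLinearEquiv x 2)).trans ?_
  rw [ContinuousMultilinearMap.compContinuousLinearMap_apply]
  congr 1
  funext j
  fin_cases j <;> simp

end ChainRule

section Harmonic

/-- The combination `∂₁Q - i∂₂Q` of the partial derivatives of `Q`. It encodes the gradient of `Q`
and, when `Q` is harmonic, is holomorphic: the complex derivative of a function with real part `Q`.
-/
def complexGradient (Q : ℂ → ℝ) (z : ℂ) : ℂ :=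
  fderiv ℝ Q z 1 - Complex.I * fderiv ℝ Q z Complex.I

theorem norm_complexGradient_le (Q : ℂ → ℝ) (z : ℂ) :
    ‖complexGradient Q z‖ ≤ 2 * ‖fderiv ℝ Q z‖ := by
  have h1 := (fderiv ℝ Q z).le_opNorm 1
  have hI := (fderiv ℝ Q z).le_opNorm Complex.I
  rw [norm_one, mul_one] at h1
  rw [Complex.norm_I, mul_one] at hI
  refine (norm_sub_le _ _).trans ?_
  rw [norm_mul, Complex.norm_I, one_mul, Complex.norm_real, Complex.norm_real]
  linarith

theorem fderiv_eq_zero_of_complexGradient_eq_zero {Q : ℂ → ℝ} {z : ℂ}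
    (h : complexGradient Q z = 0) : fderiv ℝ Q z = 0 := by
  obtain ⟨h1, hI⟩ := Complex.ext_iff.1 h
  replace h1 : fderiv ℝ Q z 1 = 0 := by simpa [complexGradient] using h1
  replace hI : fderiv ℝ Q z Complex.I = 0 := by simpa [complexGradient] using hI
  exact ContinuousLinearMap.coe_injective <| Complex.basisOneI.ext fun i => by
    fin_cases i <;> simpa

theorem complexGradient_eq_pow_mul {Q : ℂ → ℝ} {m : ℕ} (hQ : ContDiff ℝ 2 Q)
    (hhom : IsHomogeneousOfDegree Q (m + 1)) (hΔ : Δ Q = 0) (z : ℂ) :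
    complexGradient Q z = z ^ m * complexGradient Q 1 := by
  have hreal : ∀ t : ℝ, t ≠ 0 → complexGradient Q t = t ^ m * complexGradient Q 1 := fun t ht => by
    have h := hhom.fderiv t ht 1
    rw [add_sub_cancel_right, zpow_natCast, Complex.real_smul, mul_one] at h
    simp only [complexGradient, h, smul_apply, smul_eq_mul, Complex.ofReal_mul, Complex.ofReal_pow]
    ring
  have hG : AnalyticOnNhd ℂ (complexGradient Q) univ := fun w _ =>
    HarmonicAt.analyticAt_complex_partial ⟨hQ.contDiffAt, by rw [hΔ]⟩
  have hpow : AnalyticOnNhd ℂ (fun w => w ^ m * complexGradient Q 1) univ := fun w _ => by fun_prop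
  have hembed : Tendsto ((↑) : ℝ → ℂ) (𝓝[≠] 0) (𝓝[≠] 0) :=
    (Complex.continuous_ofReal.tendsto' 0 0 Complex.ofReal_zero).inf <| by simp
  have hfreq : ∃ᶠ w in 𝓝[≠] (0 : ℂ), complexGradient Q w = w ^ m * complexGradient Q 1 :=
    hembed.frequently <| Eventually.frequently <| by
      filter_upwards [self_mem_nhdsWithin] with t (ht : t ≠ 0) using hreal t ht
  exact congrFun (hG.eq_of_frequently_eq hpow hfreq) z

theorem isBigO_fderiv_of_laplacian_eq_zero_complex {Q : ℂ → ℝ} {m : ℕ} (hQ : ContDiff ℝ 2 Q)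
    (hhom : IsHomogeneousOfDegree Q (m + 1)) (hΔ : Δ Q = 0) (hne : Q ≠ 0) :
    (fun y => ‖y‖ ^ m) =O[⊤] fderiv ℝ Q := by
  have hpow := complexGradient_eq_pow_mul hQ hhom hΔ
  have hG1 : complexGradient Q 1 ≠ 0 := by
    refine fun hzero => hne (funext fun y => ?_)
    have hconst := is_const_of_fderiv_eq_zero (hQ.differentiable two_ne_zero)
      fun z => fderiv_eq_zero_of_complexGradient_eq_zero (by rw [hpow, hzero, mul_zero])
    have hscale : Q y = 2 ^ (m + 1 : ℤ) * Q y :=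
      (hconst y ((2 : ℝ) • y)).trans (hhom 2 two_ne_zero y)
    have h2 : (1 : ℝ) < 2 ^ (m + 1 : ℤ) := one_lt_zpow₀ one_lt_two (by lia)
    exact (mul_left_eq_self₀.1 hscale.symm).resolve_left h2.ne'
  refine .of_bound (2 / ‖complexGradient Q 1‖) <| .of_forall fun y => ?_
  rw [div_mul_eq_mul_div, le_div_iff₀ (norm_pos_iff.2 hG1), norm_pow, norm_norm, ← norm_pow,
    ← norm_mul, ← hpow]
  exact norm_complexGradient_le Q y

variable {E : Type*} [NormedAddCommGroup E] [InnerProductSpace ℝ E] [FiniteDimensional ℝ E]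

theorem isBigO_fderiv_of_laplacian_eq_zero (hE : finrank ℝ E = 2) {Q : E → ℝ} {m : ℕ}
    (hQ : ContDiff ℝ 2 Q) (hhom : IsHomogeneousOfDegree Q (m + 1)) (hΔ : Δ Q = 0) (hne : Q ≠ 0) :
    (fun y => ‖y‖ ^ m) =O[⊤] fderiv ℝ Q := by
  let φ : ℂ ≃ₗᵢ[ℝ] E :=
    Complex.orthonormalBasisOneI.equiv (stdOrthonormalBasis ℝ E) (finCongr hE.symm)
  have hhomφ : IsHomogeneousOfDegree (Q ∘ φ) (m + 1) := fun t ht z => by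
    simpa only [Function.comp_apply, map_smul] using hhom t ht (φ z)
  have hneφ : Q ∘ φ ≠ 0 := fun h => hne <| funext fun y => by simpa using congrFun h (φ.symm y)
  have hO := isBigO_fderiv_of_laplacian_eq_zero_complex (hQ.comp φ.contDiff) hhomφ
    (by rw [laplacian_comp_linearIsometryEquiv, hΔ]; rfl) hneφ
  have hnorm : ∀ z, ‖fderiv ℝ (Q ∘ φ) z‖ = ‖fderiv ℝ Q (φ z)‖ := fun z => by
    simpa only [norm_iteratedFDeriv_one] using φ.norm_iteratedFDeriv_comp_right Q z 1
  refine ((hO.norm_right.comp_tendsto (tendsto_top (f := φ.symm) (l := ⊤))).congr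
    (fun y => ?_) fun y => ?_).of_norm_right
  · simp
  · simp [hnorm]

theorem eventually_fderiv_ne_zero_of_laplacian_isBigO (hE : finrank ℝ E = 2) {f : E → ℝ}
    (hf : AnalyticAt ℝ f 0) (hf0 : f 0 = 0) (hne : ¬ ∀ᶠ w in 𝓝 0, f w = 0)
    (hΔ : Δ f =O[𝓝 0] f) : ∀ᶠ y in 𝓝[≠] 0, fderiv ℝ f y ≠ 0 := by
  obtain ⟨n, P, hP, hrem⟩ := exists_leadingForm hf hne
  simp only [sub_zero] at hrem
  obtain ⟨m, rfl⟩ : ∃ m, n = m + 1 := by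
    refine Nat.exists_eq_succ_of_ne_zero ?_
    rintro rfl
    obtain ⟨y, hy⟩ := hP
    have h0 := hrem.isBigO.eq_zero_imp.self_of_nhds (by simp)
    rw [zero_add, Pi.sub_apply, hf0, zero_sub, neg_eq_zero] at h0
    exact hy ((congrArg P (Subsingleton.elim _ _)).trans h0)
  set Q : E → ℝ := fun y => P fun _ => y
  have hlow : (fun y => ‖y‖ ^ m) =O[𝓝 0] fderiv ℝ Q :=
    (isBigO_fderiv_of_laplacian_eq_zero hE (contDiff_diagonal P)
      (by exact_mod_cast isHomogeneousOfDegree_diagonal P) (laplacian_diagonal_eq_zero hrem hΔ)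
      fun h => hP.elim fun y hy => hy (congrFun h y)).mono le_top
  have hfderiv_sub : fderiv ℝ (f - Q) =ᶠ[𝓝 0] fderiv ℝ f - fderiv ℝ Q := by
    filter_upwards [hf.eventually_analyticAt] with y hy
    exact fderiv_sub hy.differentiableAt
      ((contDiff_diagonal (m := 1) P).differentiable one_ne_zero y)
  have hremd : (fderiv ℝ f - fderiv ℝ Q) =o[𝓝 0] fun y => ‖y‖ ^ m :=
    ((by simpa only [zero_add] using hrem.fderiv.isBigO : fderiv ℝ (f - Q) =O[𝓝 0] _).congr'
      hfderiv_sub .rfl).trans_isLittleO (isLittleO_norm_pow_norm_pow m.lt_succ_self)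
  have hlowf : (fun y => ‖y‖ ^ m) =O[𝓝 0] fderiv ℝ f := by
    have hlead : fderiv ℝ Q =O[𝓝 0] fderiv ℝ f := by
      simpa only [Pi.sub_apply, sub_add_cancel] using
        (hremd.trans_isBigO hlow).right_isBigO_add
    exact hlow.trans hlead
  filter_upwards [hlowf.eq_zero_imp.filter_mono nhdsWithin_le_nhds, self_mem_nhdsWithin]
    with y hy hy0 h
  exact hy0 (norm_eq_zero.1 (eq_zero_of_pow_eq_zero (hy h)))

end Harmonic

section CriticalDichotomy

variable {E E' : Type*} [NormedAddCommGroup E] [NormedSpace ℝ E] [NormedAddCommGroup E']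
  [NormedSpace ℝ E'] {u : E → ℝ} {z : E}

/-- Near `z`, either `u` has no critical points other than possibly `z`, or every critical point of
`u` is a local extremum. Saddle points of `u` therefore cannot accumulate at `z`. -/
def HasCriticalDichotomyAt (u : E → ℝ) (z : E) : Prop :=
  (∀ᶠ w in 𝓝[≠] z, fderiv ℝ u w ≠ 0) ∨ ∀ᶠ w in 𝓝 z, fderiv ℝ u w = 0 → IsLocalExtr u w

namespace HasCriticalDichotomyAt

theorem neg (h : HasCriticalDichotomyAt u z) : HasCriticalDichotomyAt (-u) z := by
  refine h.imp (fun h => ?_) (fun h => ?_) <;> filter_upwards [h] with w hw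
  · simpa only [fderiv_neg, neg_ne_zero] using hw
  · exact fun hcrit => (hw (by rwa [fderiv_neg, neg_eq_zero] at hcrit)).neg

theorem of_comp {φ : E' ≃L[ℝ] E} (h : HasCriticalDichotomyAt (u ∘ φ) (φ.symm z)) :
    HasCriticalDichotomyAt u z := by
  have hcrit : ∀ w, fderiv ℝ (u ∘ φ) (φ.symm w) = 0 ↔ fderiv ℝ u w = 0 := fun w => by
    simp [φ.comp_right_fderiv, ContinuousLinearMap.ext_iff, φ.surjective.forall]
  refine h.imp (fun h => ?_) (fun h => ?_)
  · rw [← φ.symm.coe_toHomeomorph, ← φ.symm.toHomeomorph.map_punctured_nhds_eq, eventually_map] at h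
    filter_upwards [h] with w hw using (hcrit w).not.1 hw
  · filter_upwards [φ.symm.continuous.continuousAt.eventually h] with w hw hw0
    simpa [Function.comp_assoc] using
      (hw ((hcrit w).2 hw0)).comp_continuous φ.symm.continuous.continuousAt

theorem eventually_fderiv_ne_zero (h : HasCriticalDichotomyAt u z) (hz : fderiv ℝ u z = 0)
    (hmin : ¬ IsLocalMin u z) (hmax : ¬ IsLocalMax u z) : ∀ᶠ w in 𝓝[≠] z, fderiv ℝ u w ≠ 0 :=
  h.resolve_right fun hext => (hext.self_of_nhds hz).elim hmin hmax

end HasCriticalDichotomyAt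

theorem finite_setOf_saddle {K : Set E} (hK : IsCompact K)
    (h : ∀ z ∈ K, HasCriticalDichotomyAt u z) :
    {z ∈ K | fderiv ℝ u z = 0 ∧ ¬ IsLocalMin u z ∧ ¬ IsLocalMax u z}.Finite := by
  by_contra hinf
  obtain ⟨z, hzK, hz⟩ := Set.Infinite.exists_accPt_of_subset_isCompact hinf hK (sep_subset _ _)
  refine accPt_iff_frequently_nhdsNE.1 hz ?_
  rcases h z hzK with hisol | hext
  · filter_upwards [hisol] with w hw hsaddle using hw hsaddle.2.1
  · filter_upwards [hext.filter_mono nhdsWithin_le_nhds] with w hw hsaddle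
    exact (hw hsaddle.2.1).elim hsaddle.2.2.1 hsaddle.2.2.2

end CriticalDichotomy

section CriticalCurve

theorem le_of_fderiv_nonneg_of_iteratedFDeriv_nonneg {E : Type*} [NormedAddCommGroup E]
    [NormedSpace ℝ E] {u : E → ℝ} {x y : E} (hu : ∀ w ∈ segment ℝ x y, ContDiffAt ℝ 2 u w)
    (hx : 0 ≤ fderiv ℝ u x (y - x))
    (hhess : ∀ w ∈ segment ℝ x y, 0 ≤ iteratedFDeriv ℝ 2 u w (fun _ => y - x)) : u x ≤ u y := by
  set γ : ℝ →ᵃ[ℝ] E := AffineMap.lineMap x y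
  have hγ : ∀ t ∈ Icc (0 : ℝ) 1, γ t ∈ segment ℝ x y := fun t ht => by
    rw [segment_eq_image_lineMap]; exact mem_image_of_mem _ ht
  have hderiv : ∀ t ∈ Icc (0 : ℝ) 1, HasDerivAt (u ∘ γ) (fderiv ℝ u (γ t) (y - x)) t := fun t ht =>
    ((hu _ (hγ t ht)).differentiableAt two_ne_zero).hasFDerivAt.comp_hasDerivAt t
      AffineMap.hasDerivAt_lineMap
  have hderiv2 : ∀ t ∈ Icc (0 : ℝ) 1, HasDerivAt (fun t => fderiv ℝ u (γ t) (y - x))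
      (iteratedFDeriv ℝ 2 u (γ t) fun _ => y - x) t := fun t ht => by
    have hd : DifferentiableAt ℝ (fderiv ℝ u) (γ t) :=
      ((hu _ (hγ t ht)).fderiv_right (m := 1) le_rfl).differentiableAt one_ne_zero
    rw [iteratedFDeriv_two_apply]
    simpa using (hd.hasFDerivAt.comp_hasDerivAt t AffineMap.hasDerivAt_lineMap).clm_apply
      (hasDerivAt_const t (y - x))
  have hmono1 : MonotoneOn (fun t => fderiv ℝ u (γ t) (y - x)) (Icc 0 1) :=
    monotoneOn_of_hasDerivWithinAt_nonneg (convex_Icc 0 1)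
      (fun t ht => (hderiv2 t ht).continuousAt.continuousWithinAt)
      (fun t ht => (hderiv2 t (interior_subset ht)).hasDerivWithinAt)
      (fun t ht => hhess _ (hγ t (interior_subset ht)))
  have hmono : MonotoneOn (u ∘ γ) (Icc 0 1) :=
    monotoneOn_of_hasDerivWithinAt_nonneg (convex_Icc 0 1)
      (fun t ht => (hderiv t ht).continuousAt.continuousWithinAt)
      (fun t ht => (hderiv t (interior_subset ht)).hasDerivWithinAt)
      (fun t ht => by
        have ht' := interior_subset ht
        have hγ0 : 0 ≤ fderiv ℝ u (γ 0) (y - x) := by rwa [AffineMap.lineMap_apply_zero]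
        exact hγ0.trans (hmono1 (left_mem_Icc.2 zero_le_one) ht' ht'.1))
  simpa [γ] using hmono (left_mem_Icc.2 zero_le_one) (right_mem_Icc.2 zero_le_one) zero_le_one

theorem eventually_eq_of_eventually_deriv_eq_zero {F : Type*} [NormedAddCommGroup F]
    [NormedSpace ℝ F] {f : ℝ → F} {x : ℝ}
    (hf : ∀ᶠ t in 𝓝 x, DifferentiableAt ℝ f t) (hf' : ∀ᶠ t in 𝓝 x, deriv f t = 0) :
    ∀ᶠ t in 𝓝 x, f t = f x := by
  obtain ⟨r, hr, hball⟩ := Metric.eventually_nhds_iff_ball.1 (hf.and hf')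
  filter_upwards [ball_mem_nhds x hr] with t ht
  exact isOpen_ball.is_const_of_deriv_eq_zero (convex_ball x r).isPreconnected
    (fun s hs => (hball s hs).1.differentiableWithinAt) (fun s hs => (hball s hs).2) ht
    (mem_ball_self hr)

theorem exists_analyticAt_graph_of_fderiv_ne_zero {E : Type*} [NormedAddCommGroup E]
    [NormedSpace ℝ E] [CompleteSpace E] {g : E × ℝ → ℝ} {p : E × ℝ} (hg : AnalyticAt ℝ g p)
    (hne : fderiv ℝ g p (0, 1) ≠ 0) :
    ∃ ψ : E → ℝ, AnalyticAt ℝ ψ p.1 ∧ ψ p.1 = p.2 ∧ ∀ᶠ q in 𝓝 p, g q = g p ↔ ψ q.1 = q.2 := by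
  have hinv : (fderiv ℝ g p ∘L .inr ℝ E ℝ).IsInvertible :=
    ⟨.unitsEquivAut ℝ (.mk0 _ hne), by ext; simp⟩
  have hcd : ContDiffAt ℝ ⊤ g p := hg.contDiffAt
  exact ⟨hcd.implicitFunction (by simp) hinv, (hcd.contDiffAt_implicitFunction _ hinv).analyticAt,
    hcd.implicitFunction_apply_self _ hinv, hcd.eventually_apply_eq_iff_implicitFunction _ hinv⟩

theorem exists_analyticAt_fiberwise_min {E : Type*} [NormedAddCommGroup E] [NormedSpace ℝ E]
    [CompleteSpace E] {u : E × ℝ → ℝ} {p : E × ℝ} (hu : AnalyticAt ℝ u p)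
    (hcrit : fderiv ℝ u p (0, 1) = 0) (hpos : 0 < iteratedFDeriv ℝ 2 u p fun _ => (0, 1)) :
    ∃ ψ : E → ℝ, AnalyticAt ℝ ψ p.1 ∧ ψ p.1 = p.2 ∧
      (∀ᶠ q in 𝓝 p, fderiv ℝ u q (0, 1) = 0 → ψ q.1 = q.2) ∧
      ∀ᶠ q in 𝓝 p, u (q.1, ψ q.1) ≤ u q := by
  have hg : AnalyticAt ℝ (fun q => fderiv ℝ u q (0, 1)) p :=
    ((ContinuousLinearMap.apply ℝ ℝ ((0, 1) : E × ℝ)).analyticAt _).comp hu.fderiv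
  have hg' : fderiv ℝ (fun q => fderiv ℝ u q (0, 1)) p (0, 1) ≠ 0 := by
    rw [iteratedFDeriv_two_apply] at hpos
    rw [fderiv_clm_apply hu.fderiv.differentiableAt (differentiableAt_const _)]
    simpa using hpos.ne'
  obtain ⟨ψ, hψ, hψp, hgraph⟩ := exists_analyticAt_graph_of_fderiv_ne_zero hg hg'
  simp only [hcrit] at hgraph
  refine ⟨ψ, hψ, hψp, hgraph.mono fun q => Iff.mp, ?_⟩
  have hγ : Tendsto (fun q : E × ℝ => (q.1, ψ q.1)) (𝓝 p) (𝓝 p) := by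
    have h : ContinuousAt (fun q : E × ℝ => (q.1, ψ q.1)) p :=
      continuousAt_fst.prodMk (hψ.continuousAt.comp continuousAt_fst)
    simpa only [ContinuousAt, hψp] using h
  have hhess : ContinuousAt (fun w => iteratedFDeriv ℝ 2 u w fun _ => (0, 1)) p :=
    (hu.contDiffAt.continuousAt_iteratedFDeriv (n := 2) le_rfl).eval_const _
  obtain ⟨r, hr, hball⟩ := Metric.eventually_nhds_iff_ball.1
    (hu.eventually_analyticAt.and (hhess.eventually_const_lt hpos))
  have hγcrit : ∀ᶠ q in 𝓝 p, fderiv ℝ u (q.1, ψ q.1) (0, 1) = 0 :=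
    (hγ.eventually hgraph).mono fun q hq => hq.2 rfl
  filter_upwards [ball_mem_nhds p hr, hγ (ball_mem_nhds p hr), hγcrit] with q hq hγq hcritq
  have hseg := (convex_ball p r).segment_subset hγq hq
  have hvert : q - (q.1, ψ q.1) = (q.2 - ψ q.1) • (0, 1) := by ext <;> simp
  refine le_of_fderiv_nonneg_of_iteratedFDeriv_nonneg
    (fun w hw => (hball w (hseg hw)).1.contDiffAt) ?_ fun w hw => ?_
  · rw [hvert, map_smul, hcritq, smul_zero]
  · rw [hvert, (iteratedFDeriv ℝ 2 u w).map_smul_univ (fun _ => q.2 - ψ q.1) fun _ => (0, 1)]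
    simpa [← sq] using mul_nonneg (sq_nonneg (q.2 - ψ q.1)) (hball w (hseg hw)).2.le

theorem deriv_graph_eq_zero {E F : Type*} [NormedAddCommGroup E] [NormedSpace ℝ E]
    [NormedAddCommGroup F] [NormedSpace ℝ F] {u : ℝ × E → F} {ψ : ℝ → E} {s : ℝ}
    (hu : DifferentiableAt ℝ u (s, ψ s)) (hψ : DifferentiableAt ℝ ψ s)
    (hcrit : fderiv ℝ u (s, ψ s) = 0) : deriv (fun t => u (t, ψ t)) s = 0 := by
  have h := hu.hasFDerivAt.comp_hasDerivAt s ((hasDerivAt_id s).prodMk hψ.hasDerivAt)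
  rw [hcrit] at h
  exact h.deriv

theorem hasCriticalDichotomyAt_of_iteratedFDeriv_prod_pos {u : ℝ × ℝ → ℝ} {p : ℝ × ℝ}
    (hu : AnalyticAt ℝ u p) (hpos : 0 < iteratedFDeriv ℝ 2 u p fun _ => (0, 1)) :
    HasCriticalDichotomyAt u p := by
  by_cases hcrit : fderiv ℝ u p = 0
  swap
  · exact .inl ((hu.fderiv.continuousAt.eventually_ne hcrit).filter_mono nhdsWithin_le_nhds)
  obtain ⟨ψ, hψ, hψp, hgraph, hle⟩ := exists_analyticAt_fiberwise_min hu (by rw [hcrit]; rfl) hpos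
  replace hgraph : ∀ᶠ q in 𝓝 p, fderiv ℝ u q = 0 → ψ q.1 = q.2 :=
    hgraph.mono fun q hq hq0 => hq (by rw [hq0]; rfl)
  set m : ℝ → ℝ := fun s => u (s, ψ s)
  have hm : AnalyticAt ℝ m p.1 := hu.comp_of_eq (analyticAt_id.prod hψ) (Prod.ext rfl hψp)
  rcases hm.deriv.eventually_eq_zero_or_eventually_ne_zero with hconst | hisol
  · right
    have hmp : ∀ᶠ s in 𝓝 p.1, m s = u p := by
      simpa only [m, hψp] using eventually_eq_of_eventually_deriv_eq_zero
        (hm.eventually_analyticAt.mono fun s hs => hs.differentiableAt) hconst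
    have hmin : ∀ᶠ q in 𝓝 p, u p ≤ u q := by
      filter_upwards [hle, continuousAt_fst.eventually hmp] with q hq hmq using hmq ▸ hq
    filter_upwards [hgraph, continuousAt_fst.eventually hmp, hmin.eventually_nhds]
      with q hgraphq hmq hminq hcritq
    have huq : u q = u p := by rw [← hmq, ← Prod.mk.eta (p := q), ← hgraphq hcritq]
    exact .inl (hminq.mono fun w hw => huq.trans_le hw)
  · left
    rw [eventually_nhdsWithin_iff] at hisol ⊢
    have hana : ∀ᶠ q : ℝ × ℝ in 𝓝 p, AnalyticAt ℝ ψ q.1 :=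
      continuousAt_fst.eventually hψ.eventually_analyticAt
    filter_upwards [hgraph, hana, hu.eventually_analyticAt, continuousAt_fst.eventually hisol]
      with q hgraphq hψq huq hisolq hqp hcritq
    have hq1 : q.1 ≠ p.1 := fun h => hqp (Prod.ext h (by rw [← hgraphq hcritq, h, hψp]))
    have hγq : (q.1, ψ q.1) = q := Prod.ext rfl (hgraphq hcritq)
    exact hisolq hq1 (deriv_graph_eq_zero (by rw [hγq]; exact huq.differentiableAt)
      hψq.differentiableAt (by rwa [hγq]))

theorem hasCriticalDichotomyAt_of_iteratedFDeriv_pos {E : Type*} [NormedAddCommGroup E]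
    [NormedSpace ℝ E] (hE : finrank ℝ E = 2) {u : E → ℝ} {z e : E} (hu : AnalyticAt ℝ u z)
    (hpos : 0 < iteratedFDeriv ℝ 2 u z fun _ => e) :
    HasCriticalDichotomyAt u z := by
  have : FiniteDimensional ℝ E := .of_finrank_pos (by lia)
  have he : e ≠ 0 := by
    rintro rfl
    exact hpos.ne' ((iteratedFDeriv ℝ 2 u z).map_zero)
  let φ₀ : (ℝ × ℝ) ≃L[ℝ] E := .ofFinrankEq (by simp [hE])
  obtain ⟨A, hA⟩ := SeparatingDual.exists_continuousLinearEquiv_apply_eq (R := ℝ)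
    (x := φ₀ (0, 1)) (y := e) (by simp) he
  let φ : (ℝ × ℝ) ≃L[ℝ] E := φ₀.trans A
  have hφ : φ (0, 1) = e := hA
  refine .of_comp (φ := φ) (hasCriticalDichotomyAt_of_iteratedFDeriv_prod_pos ?_ ?_)
  · exact hu.comp_of_eq ((φ : (ℝ × ℝ) →L[ℝ] E).analyticAt _) (φ.apply_symm_apply z)
  · simpa [iteratedFDeriv_comp_continuousLinearEquiv, hφ] using hpos

theorem hasCriticalDichotomyAt_of_iteratedFDeriv_ne_zero {E : Type*} [NormedAddCommGroup E]
    [NormedSpace ℝ E] (hE : finrank ℝ E = 2) {u : E → ℝ} {z e : E} (hu : AnalyticAt ℝ u z)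
    (hne : iteratedFDeriv ℝ 2 u z (fun _ => e) ≠ 0) :
    HasCriticalDichotomyAt u z := by
  rcases hne.lt_or_gt with hneg | hpos
  · rw [← neg_neg u]
    refine (hasCriticalDichotomyAt_of_iteratedFDeriv_pos (e := e) hE hu.neg ?_).neg
    rwa [iteratedFDeriv_neg, Pi.neg_apply, neg_apply, neg_pos]
  · exact hasCriticalDichotomyAt_of_iteratedFDeriv_pos hE hu hpos

end CriticalCurve

section SemilinearEquation

variable {E : Type*} [NormedAddCommGroup E] [InnerProductSpace ℝ E] [FiniteDimensional ℝ E]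
  {u : E → ℝ} {z : E}

theorem eventually_fderiv_ne_zero_of_laplacian_isBigO_sub (hE : finrank ℝ E = 2)
    (hu : AnalyticAt ℝ u z) (hne : ¬ ∀ᶠ w in 𝓝 z, u w = u z)
    (hΔ : Δ u =O[𝓝 z] fun w => u w - u z) : ∀ᶠ w in 𝓝[≠] z, fderiv ℝ u w ≠ 0 := by
  set f : E → ℝ := fun y => u (z + y) - u z
  have hf : AnalyticAt ℝ f 0 :=
    (hu.comp_of_eq (analyticAt_const.add analyticAt_id) (add_zero z)).sub analyticAt_const
  have hf' : ∀ y, fderiv ℝ f y = fderiv ℝ u (z + y) := fun y => by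
    rw [fderiv_sub_const, fderiv_comp_add_left]
  have hf'' : ∀ y, Δ f y = Δ u (z + y) := fun y => by
    simp only [laplacian_eq_sum_fderiv_fderiv, funext hf', fderiv_comp_add_left]
  have hnhds : map (z + ·) (𝓝 0) = 𝓝 z := by simp
  have hnhdsNE : map (z + ·) (𝓝[≠] 0) = 𝓝[≠] z := by simp
  rw [← hnhds] at hne hΔ
  rw [← hnhdsNE, eventually_map]
  simp only [← hf']
  refine eventually_fderiv_ne_zero_of_laplacian_isBigO hE hf (by simp [f]) ?_ ?_
  · simpa only [f, sub_eq_zero, eventually_map] using hne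
  · simpa only [funext hf'', Function.comp_def] using isBigO_map.1 hΔ

theorem hasCriticalDichotomyAt_of_laplacian_ne_zero (hE : finrank ℝ E = 2)
    (hu : AnalyticAt ℝ u z) (hΔ : Δ u z ≠ 0) : HasCriticalDichotomyAt u z := by
  rw [laplacian_eq_sum_fderiv_fderiv] at hΔ
  obtain ⟨i, -, hi⟩ := Finset.exists_ne_zero_of_sum_ne_zero hΔ
  exact hasCriticalDichotomyAt_of_iteratedFDeriv_ne_zero hE hu (by rwa [iteratedFDeriv_two_apply])

theorem hasCriticalDichotomyAt_of_laplacian_sub_isBigO (hE : finrank ℝ E = 2)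
    (hu : AnalyticAt ℝ u z)
    (hO : (fun w => Δ u w - Δ u z) =O[𝓝 z] fun w => u w - u z) :
    HasCriticalDichotomyAt u z := by
  by_cases hΔ : Δ u z = 0
  · by_cases hconst : ∀ᶠ w in 𝓝 z, u w = u z
    · refine .inr (hconst.eventually_nhds.mono fun w hw _ => .inl ?_)
      exact hw.mono fun v hv => (hw.self_of_nhds.trans hv.symm).le
    · simp only [hΔ, sub_zero] at hO
      exact .inl (eventually_fderiv_ne_zero_of_laplacian_isBigO_sub hE hu hconst hO)
  · exact hasCriticalDichotomyAt_of_laplacian_ne_zero hE hu hΔ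

theorem hasCriticalDichotomyAt_of_laplacian_eq_comp (hE : finrank ℝ E = 2)
    (hu : AnalyticAt ℝ u z) {f : ℝ → ℝ} (hf : LocallyLipschitz f)
    (heq : ∀ᶠ w in 𝓝 z, Δ u w = f (u w)) : HasCriticalDichotomyAt u z := by
  obtain ⟨C, t, ht, hC⟩ := hf (u z)
  refine hasCriticalDichotomyAt_of_laplacian_sub_isBigO hE hu (.of_bound C ?_)
  filter_upwards [heq, hu.continuousAt.eventually ht] with w hw hwt
  rw [hw, heq.self_of_nhds]
  exact hC.norm_sub_le hwt (mem_of_mem_nhds ht)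

theorem saddle_points_isolated_and_finite_general (hE : finrank ℝ E = 2) {K : Set E}
    (hK : IsCompact K) (hu : AnalyticOnNhd ℝ u K) {f : ℝ → ℝ} (hf : LocallyLipschitz f)
    (heq : ∀ᶠ w in 𝓝ˢ K, Δ u w = f (u w)) :
    (∀ z₀ ∈ K, fderiv ℝ u z₀ = 0 → ¬ IsLocalMin u z₀ → ¬ IsLocalMax u z₀ →
      ∃ ε > 0, ∀ w ∈ ball z₀ ε, fderiv ℝ u w = 0 → w = z₀) ∧
    {z ∈ K | fderiv ℝ u z = 0 ∧ ¬ IsLocalMin u z ∧ ¬ IsLocalMax u z}.Finite := by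
  have hdich : ∀ z ∈ K, HasCriticalDichotomyAt u z := fun z hz =>
    hasCriticalDichotomyAt_of_laplacian_eq_comp hE (hu z hz) hf
      (eventually_nhdsSet_iff_forall.1 heq z hz)
  refine ⟨fun z₀ hz₀ hcrit hmin hmax => ?_, finite_setOf_saddle hK hdich⟩
  have hisol := (hdich z₀ hz₀).eventually_fderiv_ne_zero hcrit hmin hmax
  obtain ⟨ε, hε, hball⟩ := Metric.eventually_nhds_iff_ball.1 (eventually_nhdsWithin_iff.1 hisol)
  exact ⟨ε, hε, fun w hw hw0 => not_not.1 fun hne => hball w hw hne hw0⟩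

end SemilinearEquation

theorem lap_eq_laplacian (u : E2 → ℝ) : lap u = Δ u := by
  funext z
  rw [laplacian_eq_iteratedFDeriv_orthonormalBasis u (EuclideanSpace.basisFun (Fin 2) ℝ)]
  simp [lap, iteratedFDeriv_two_apply]

theorem gradient_eq_zero_iff {E : Type*} [NormedAddCommGroup E] [InnerProductSpace ℝ E]
    [CompleteSpace E] {u : E → ℝ} {z : E} : gradient u z = 0 ↔ fderiv ℝ u z = 0 := by
  simp [gradient]

end Development

/-- Every saddle point (a critical point which is neither a local minimum nor a local
maximum) of `u` in `closure Ω` is an isolated critical point, and the set of such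
saddle points is finite. -/
theorem saddle_points_isolated_and_finite
    (Ω U : Set E2) (hΩne : Ω.Nonempty) (hΩo : IsOpen Ω)
    (hΩb : Bornology.IsBounded Ω)
    (hUo : IsOpen U) (hUconn : IsConnected U) (hsub : closure Ω ⊆ U)
    (lam : ℝ) (hlam : 0 < lam)
    (u : E2 → ℝ) (hu : AnalyticOnNhd ℝ u U)
    (hne : ∃ z ∈ U, u z ≠ 0)
    (heq : ∀ z ∈ U, lap u z + lam * u z = 0) :
    (∀ z₀ ∈ closure Ω, gradient u z₀ = 0 → ¬ IsLocalMin u z₀ → ¬ IsLocalMax u z₀ →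
      ∃ ε > 0, ∀ w ∈ ball z₀ ε, gradient u w = 0 → w = z₀) ∧
    {z ∈ closure Ω | gradient u z = 0 ∧ ¬ IsLocalMin u z ∧ ¬ IsLocalMax u z}.Finite := by
  have hΔ : ∀ᶠ w in 𝓝ˢ (closure Ω), Laplacian.laplacian u w = -lam * u w := by
    filter_upwards [hUo.mem_nhdsSet.2 hsub] with w hw
    rw [← lap_eq_laplacian, neg_mul, ← add_eq_zero_iff_eq_neg, heq w hw]
  simpa only [gradient_eq_zero_iff] using saddle_points_isolated_and_finite_general (by simp)
    hΩb.isCompact_closure (hu.mono hsub) (lipschitzWith_smul (-lam)).locallyLipschitz hΔ
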